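/- Let (t, n, b) be a smooth right-handed orthonormal frame on an open set U ⊆ ℝ³ with Ω_n = 0 and Ω_b = 0 identically on U (so both n and b are Poisson vectors). Suppose there are smooth scalar functions H₁, H₂ and a smooth nowhere-zero vector field v on U with v = n × ∇H₂, v = b × ∇H₁ and t = v/‖v‖. Then the compatibility condition Ω_nb = n·(curl b) + b·(curl n) = 0 holds on U, i.e., n and b are compatible Poisson vectors. -/

import Mathlib

noncomputable section

/-- Three-dimensional Euclidean space. -/
abbrev E3 : Type := EuclideanSpace ℝ (Fin 3)

/-- The Euclidean dot product on ℝ³. -/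
def dot (u v : E3) : ℝ := ∑ i, u i * v i

/-- The cross product on ℝ³. -/
def cross (u v : E3) : E3 :=
  (WithLp.equiv 2 (Fin 3 → ℝ)).symm
    ![u 1 * v 2 - u 2 * v 1, u 2 * v 0 - u 0 * v 2, u 0 * v 1 - u 1 * v 0]

/-- Partial derivative of a scalar function in the `i`-th coordinate direction. -/
def pd (i : Fin 3) (f : E3 → ℝ) (x : E3) : ℝ :=
  fderiv ℝ f x (EuclideanSpace.single i 1)

/-- The gradient ∇f of a scalar function. -/
def grad (f : E3 → ℝ) (x : E3) : E3 :=
  (WithLp.equiv 2 (Fin 3 → ℝ)).symm ![pd 0 f x, pd 1 f x, pd 2 f x]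

/-- The curl ∇×F of a vector field. -/
def curl (F : E3 → E3) (x : E3) : E3 :=
  (WithLp.equiv 2 (Fin 3 → ℝ)).symm
    ![pd 1 (fun y => F y 2) x - pd 2 (fun y => F y 1) x,
      pd 2 (fun y => F y 0) x - pd 0 (fun y => F y 2) x,
      pd 0 (fun y => F y 1) x - pd 1 (fun y => F y 0) x]

/-- Directional derivative ∂ₛ f = t·∇f of a scalar function along a vector field t. -/
def ds (t : E3 → E3) (f : E3 → ℝ) (x : E3) : ℝ := dot (t x) (grad f x)

/-- Componentwise directional derivative (u·∇)w of a vector field w along u. -/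
def dirDeriv (u w : E3 → E3) (x : E3) : E3 :=
  (WithLp.equiv 2 (Fin 3 → ℝ)).symm
    ![fderiv ℝ (fun y => w y 0) x (u x),
      fderiv ℝ (fun y => w y 1) x (u x),
      fderiv ℝ (fun y => w y 2) x (u x)]

/-- Helicity density w·(curl w) of a vector field. -/
def hel (w : E3 → E3) (x : E3) : ℝ := dot (w x) (curl w x)

/-- Cross-helicity sum n·(curl b) + b·(curl n). -/
def crossHel (n b : E3 → E3) (x : E3) : ℝ :=
  dot (n x) (curl b x) + dot (b x) (curl n x)

/-- A smooth right-handed orthonormal (Serret–Frenet type) frame on U. -/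
def IsFrameOn (t n b : E3 → E3) (U : Set E3) : Prop :=
  ContDiffOn ℝ (⊤ : ℕ∞) t U ∧ ContDiffOn ℝ (⊤ : ℕ∞) n U ∧ ContDiffOn ℝ (⊤ : ℕ∞) b U ∧
  ∀ x ∈ U, ‖t x‖ = 1 ∧ ‖n x‖ = 1 ∧ ‖b x‖ = 1 ∧
    dot (t x) (n x) = 0 ∧ dot (t x) (b x) = 0 ∧ dot (n x) (b x) = 0 ∧
    b x = cross (t x) (n x)

/-!
Both representations of `v` compute its divergence: `div (n × ∇H₂) = ∇H₂ · curl n` and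
`div (b × ∇H₁) = ∇H₁ · curl b`, because gradients are curl-free. At each point `n`, `b`, `∇H₁`,
`∇H₂` lie in the plane orthogonal to `v`, so with `v = β (n × b)` one has `∇H₂ = α n + β b` and
`∇H₁ = δ b - β n`. As `n · curl n = b · curl b = 0`, the two expressions for `div v` reduce to
`β b · curl n` and `-β n · curl b`, and `β ≠ 0`.
-/

section VectorAlgebra

lemma dot_eq (u v : E3) : dot u v = u 0 * v 0 + u 1 * v 1 + u 2 * v 2 :=
  Fin.sum_univ_three _

lemma cross_apply_zero (u v : E3) : cross u v 0 = u 1 * v 2 - u 2 * v 1 := rfl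

lemma cross_apply_one (u v : E3) : cross u v 1 = u 2 * v 0 - u 0 * v 2 := rfl

lemma cross_apply_two (u v : E3) : cross u v 2 = u 0 * v 1 - u 1 * v 0 := rfl

lemma dot_self_eq_norm_sq (u : E3) : dot u u = ‖u‖ ^ 2 := by
  simp only [dot, EuclideanSpace.real_norm_sq_eq, ← sq]

lemma dot_self_ne_zero {u : E3} (hu : u ≠ 0) : dot u u ≠ 0 := by
  rw [dot_self_eq_norm_sq]
  exact pow_ne_zero 2 (norm_ne_zero_iff.2 hu)

lemma dot_comm (u v : E3) : dot u v = dot v u :=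
  dotProduct_comm _ _

lemma dot_neg_right (u v : E3) : dot u (-v) = -dot u v :=
  dotProduct_neg _ _

lemma dot_zero_right (u : E3) : dot u 0 = 0 :=
  dotProduct_zero _

lemma neg_cross_comm (u v : E3) : -cross u v = cross v u :=
  congrArg (WithLp.toLp 2) (cross_anticomm (WithLp.ofLp u) (WithLp.ofLp v))

lemma dot_self_cross_eq_zero (u v : E3) : dot u (cross u v) = 0 :=
  dot_self_cross _ _

lemma dot_cross_rotate (u v w : E3) : dot u (cross v w) = dot v (cross w u) :=
  triple_product_permutation _ _ _

lemma dot_cross_cross (u v w z : E3) :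
    dot (cross u v) (cross w z) = dot u w * dot v z - dot u z * dot v w :=
  cross_dot_cross _ _ _ _

/-- Cramer's rule for `w` in the basis `u`, `v`, `u × v`, paired with `p`. -/
lemma dot_cross_self_mul_dot (u v w p : E3) :
    dot (cross u v) (cross u v) * dot w p =
      dot (cross u v) (cross w v) * dot u p + dot (cross u v) (cross u w) * dot v p +
        dot (cross u v) w * dot (cross u v) p := by
  simp only [dot_eq, cross_apply_zero, cross_apply_one, cross_apply_two]
  ring

lemma dot_cross_ne_zero_of_orthogonal {u v w : E3} (huv : cross u v ≠ 0) (hw : w ≠ 0)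
    (hu : dot u w = 0) (hv : dot v w = 0) : dot (cross u v) w ≠ 0 := by
  have hsq := dot_cross_self_mul_dot u v w w
  rw [hu, hv, mul_zero, mul_zero, zero_add, zero_add] at hsq
  exact left_ne_zero_of_mul (hsq ▸ mul_ne_zero (dot_self_ne_zero huv) (dot_self_ne_zero hw))

/-- With `p = curl n` and `q = curl b` this is the compatibility condition at a point. -/
lemma dot_add_dot_eq_zero_of_cross_eq {n b g h p q : E3} (hnb : cross n b ≠ 0)
    (hv : cross n g ≠ 0) (hgh : cross n g = cross b h) (hp : dot n p = 0) (hq : dot b q = 0)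
    (hpq : dot g p = dot h q) : dot n q + dot b p = 0 := by
  have hnv : dot n (cross n g) = 0 := dot_self_cross_eq_zero n g
  have hbv : dot b (cross n g) = 0 := hgh ▸ dot_self_cross_eq_zero b h
  have hcg : dot (cross n b) g = 0 := by
    rw [dot_comm, dot_cross_rotate, dot_cross_rotate, ← neg_cross_comm n g, dot_neg_right, hbv,
      neg_zero]
  have hch : dot (cross n b) h = 0 := by
    rw [dot_comm, dot_cross_rotate, ← hgh, hnv]
  have hβ : dot (cross n b) (cross n g) ≠ 0 := dot_cross_ne_zero_of_orthogonal hnb hv hnv hbv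
  have hgp : dot (cross n b) (cross n b) * dot g p =
      dot (cross n b) (cross n g) * dot b p := by
    rw [dot_cross_self_mul_dot, hp, hcg, mul_zero, zero_mul, zero_add, add_zero]
  have hhq : dot (cross n b) (cross n b) * dot h q =
      -dot (cross n b) (cross n g) * dot n q := by
    rw [dot_cross_self_mul_dot, hq, hch, ← neg_cross_comm b h, ← hgh, dot_neg_right, mul_zero,
      zero_mul, add_zero, add_zero]
  refine (mul_eq_zero.1 ?_).resolve_left hβ
  linear_combination dot (cross n b) (cross n b) * hpq - hgp + hhq

end VectorAlgebra

section VectorCalculus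

open scoped Topology

lemma pd_congr {f g : E3 → ℝ} {x : E3} (h : f =ᶠ[𝓝 x] g) (i : Fin 3) : pd i f x = pd i g x := by
  rw [pd, pd, h.fderiv_eq]

lemma pd_sub {f g : E3 → ℝ} {x : E3} (hf : DifferentiableAt ℝ f x) (hg : DifferentiableAt ℝ g x)
    (i : Fin 3) : pd i (fun y => f y - g y) x = pd i f x - pd i g x := by
  simp only [pd, fderiv_fun_sub hf hg, sub_apply]

lemma pd_mul {f g : E3 → ℝ} {x : E3} (hf : DifferentiableAt ℝ f x) (hg : DifferentiableAt ℝ g x)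
    (i : Fin 3) : pd i (fun y => f y * g y) x = f x * pd i g x + g x * pd i f x := by
  simp only [pd, fderiv_fun_mul hf hg, add_apply, smul_apply, smul_eq_mul]

lemma differentiableAt_fderiv {H : E3 → ℝ} {x : E3} (hH : ContDiffAt ℝ 2 H x) :
    DifferentiableAt ℝ (fderiv ℝ H) x :=
  (hH.fderiv_right (m := 1) (by norm_num)).differentiableAt one_ne_zero

lemma differentiableAt_grad {H : E3 → ℝ} {x : E3} (hH : ContDiffAt ℝ 2 H x) :
    DifferentiableAt ℝ (grad H) x := by
  refine differentiableAt_euclidean.2 fun i => ?_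
  fin_cases i <;> exact (differentiableAt_fderiv hH).clm_apply (differentiableAt_const _)

lemma pd_comm {H : E3 → ℝ} {x : E3} (hH : ContDiffAt ℝ 2 H x) (i j : Fin 3) :
    pd i (pd j H) x = pd j (pd i H) x := by
  have hpd (i j : Fin 3) : pd i (pd j H) x =
      fderiv ℝ (fderiv ℝ H) x (EuclideanSpace.single i 1) (EuclideanSpace.single j 1) := by
    unfold pd
    rw [fderiv_clm_apply (differentiableAt_fderiv hH) (differentiableAt_const _)]
    simp
  rw [hpd, hpd]
  exact (hH.isSymmSndFDerivAt (by simp)).eq _ _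

lemma curl_grad {H : E3 → ℝ} {x : E3} (hH : ContDiffAt ℝ 2 H x) : curl (grad H) x = 0 := by
  ext i
  fin_cases i <;> exact sub_eq_zero.2 (pd_comm hH _ _)

lemma curl_apply_zero (F : E3 → E3) (x : E3) :
    curl F x 0 = pd 1 (fun y => F y 2) x - pd 2 (fun y => F y 1) x := rfl

lemma curl_apply_one (F : E3 → E3) (x : E3) :
    curl F x 1 = pd 2 (fun y => F y 0) x - pd 0 (fun y => F y 2) x := rfl

lemma curl_apply_two (F : E3 → E3) (x : E3) :
    curl F x 2 = pd 0 (fun y => F y 1) x - pd 1 (fun y => F y 0) x := rfl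

/-- The divergence `∇ · F` of a vector field, as the sum of the diagonal partial derivatives. -/
def divergence (F : E3 → E3) (x : E3) : ℝ := ∑ i, pd i (fun y => F y i) x

lemma divergence_congr {F G : E3 → E3} {x : E3} (h : F =ᶠ[𝓝 x] G) :
    divergence F x = divergence G x :=
  Finset.sum_congr rfl fun i _ => pd_congr (h.fun_comp fun u : E3 => u i) i

lemma divergence_cross {F G : E3 → E3} {x : E3} (hF : DifferentiableAt ℝ F x)
    (hG : DifferentiableAt ℝ G x) :
    divergence (fun y => cross (F y) (G y)) x =
      dot (G x) (curl F x) - dot (F x) (curl G x) := by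
  have hpd (k i j : Fin 3) : pd k (fun y => F y i * G y j - F y j * G y i) x =
      F x i * pd k (fun y => G y j) x + G x j * pd k (fun y => F y i) x -
        (F x j * pd k (fun y => G y i) x + G x i * pd k (fun y => F y j) x) := by
    have hFi := differentiableAt_euclidean.1 hF
    have hGi := differentiableAt_euclidean.1 hG
    rw [pd_sub ((hFi i).fun_mul (hGi j)) ((hFi j).fun_mul (hGi i)), pd_mul (hFi i) (hGi j),
      pd_mul (hFi j) (hGi i)]
  simp only [divergence, Fin.sum_univ_three, cross_apply_zero, cross_apply_one, cross_apply_two,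
    hpd, dot_eq, curl_apply_zero, curl_apply_one, curl_apply_two]
  ring

lemma divergence_cross_grad {F : E3 → E3} {H : E3 → ℝ} {x : E3} (hF : DifferentiableAt ℝ F x)
    (hH : ContDiffAt ℝ 2 H x) :
    divergence (fun y => cross (F y) (grad H y)) x = dot (grad H x) (curl F x) := by
  rw [divergence_cross hF (differentiableAt_grad hH), curl_grad hH, dot_zero_right, sub_zero]

end VectorCalculus

lemma IsFrameOn.cross_normal_binormal_ne_zero {t n b : E3 → E3} {U : Set E3}
    (h : IsFrameOn t n b U) {x : E3} (hx : x ∈ U) : cross (n x) (b x) ≠ 0 := by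
  obtain ⟨-, hn, hb, -, -, hnb, -⟩ := h.2.2.2 x hx
  have hdot : dot (cross (n x) (b x)) (cross (n x) (b x)) = 1 := by
    rw [dot_cross_cross, dot_self_eq_norm_sq, dot_self_eq_norm_sq, hn, hb, hnb]
    norm_num
  intro h0
  rw [h0, dot_zero_right] at hdot
  exact zero_ne_one hdot

theorem normal_binormal_compatible_general {U : Set E3} (hU : IsOpen U) {n b : E3 → E3}
    (hn : DifferentiableOn ℝ n U) (hb : DifferentiableOn ℝ b U)
    (hnb : ∀ x ∈ U, cross (n x) (b x) ≠ 0)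
    (hΩn : ∀ x ∈ U, hel n x = 0) (hΩb : ∀ x ∈ U, hel b x = 0) {H₁ H₂ : E3 → ℝ}
    (hH₁ : ContDiffOn ℝ 2 H₁ U) (hH₂ : ContDiffOn ℝ 2 H₂ U)
    {v : E3 → E3} (hv0 : ∀ x ∈ U, v x ≠ 0)
    (hham₂ : ∀ x ∈ U, v x = cross (n x) (grad H₂ x))
    (hham₁ : ∀ x ∈ U, v x = cross (b x) (grad H₁ x)) :
    ∀ x ∈ U, crossHel n b x = 0 := by
  intro x hx
  have hxU : U ∈ nhds x := hU.mem_nhds hx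
  have hdiv₂ : divergence v x = dot (grad H₂ x) (curl n x) :=
    (divergence_congr (Filter.eventually_of_mem hxU hham₂)).trans
      (divergence_cross_grad (hn.differentiableAt hxU) (hH₂.contDiffAt hxU))
  have hdiv₁ : divergence v x = dot (grad H₁ x) (curl b x) :=
    (divergence_congr (Filter.eventually_of_mem hxU hham₁)).trans
      (divergence_cross_grad (hb.differentiableAt hxU) (hH₁.contDiffAt hxU))
  exact dot_add_dot_eq_zero_of_cross_eq (hnb x hx) (hham₂ x hx ▸ hv0 x hx)
    ((hham₂ x hx).symm.trans (hham₁ x hx)) (hΩn x hx) (hΩb x hx) (hdiv₂.symm.trans hdiv₁)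

/-- if Ωₙ = Ωᵦ = 0 and v = n × ∇H₂ = b × ∇H₁ with t = v/‖v‖, then
Ωₙᵦ = 0, i.e. n and b are compatible Poisson vectors. -/
theorem normal_binormal_compatible
    (U : Set E3) (hU : IsOpen U) (t n b : E3 → E3)
    (hframe : IsFrameOn t n b U)
    (hΩn : ∀ x ∈ U, hel n x = 0) (hΩb : ∀ x ∈ U, hel b x = 0)
    (H₁ H₂ : E3 → ℝ)
    (hH₁ : ContDiffOn ℝ (⊤ : ℕ∞) H₁ U) (hH₂ : ContDiffOn ℝ (⊤ : ℕ∞) H₂ U)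
    (v : E3 → E3) (hv : ContDiffOn ℝ (⊤ : ℕ∞) v U) (hv0 : ∀ x ∈ U, v x ≠ 0)
    (hham₂ : ∀ x ∈ U, v x = cross (n x) (grad H₂ x))
    (hham₁ : ∀ x ∈ U, v x = cross (b x) (grad H₁ x))
    (ht : ∀ x ∈ U, t x = ‖v x‖⁻¹ • v x) :
    ∀ x ∈ U, crossHel n b x = 0 := by
  have hsmooth : (2 : WithTop ℕ∞) ≤ (⊤ : ℕ∞) := WithTop.coe_le_coe.2 le_top
  exact normal_binormal_compatible_general hU (hframe.2.1.differentiableOn (by simp))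
    (hframe.2.2.1.differentiableOn (by simp)) (fun _ => hframe.cross_normal_binormal_ne_zero)
    hΩn hΩb (hH₁.of_le hsmooth) (hH₂.of_le hsmooth) hv0 hham₂ hham₁
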